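/- Let q₁,…,q₆ ∈ ℝ² be six points in convex position, let G be the set of all 13 pairs of {1,…,6} except {2,5} and {3,6}, and let λ be a nonzero linear dependence among the rows of C₃(q₁,…,q₆) indexed by G (which is unique up to scalar). Then λ_{15} ≠ 0, and: (i) if the six points are positively oriented then λ_{14}·λ_{15} > 0; (ii) if they are negatively oriented then λ_{14}·λ_{15} < 0; (iii) if they are in Desargues position then λ_{14} = 0. -/

import Mathlib

open scoped BigOperators

/-- A pair `{i,j}` of distinct vertices of the `n`-gon.  Vertices `1,…,n` are represented by
`Fin n` (vertex `i` corresponds to `i-1 : Fin n`), and a pair is recorded with its endpoints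
in increasing order. -/
abbrev Pair (n : ℕ) := {p : Fin n × Fin n // p.1 < p.2}

/-- Two pairs `{i,j}` (`i<j`) and `{k,l}` (`k<l`) cross if `i<k<j<l` or `k<i<l<j`. -/
def Cross {n : ℕ} (e f : Pair n) : Prop :=
  (e.val.1 < f.val.1 ∧ f.val.1 < e.val.2 ∧ e.val.2 < f.val.2) ∨
  (f.val.1 < e.val.1 ∧ e.val.1 < f.val.2 ∧ f.val.2 < e.val.2)

/-- A set of pairs is `(k+1)`-crossing-free if it contains no `k+1` pairwise crossing pairs. -/
def CrossingFree (n k : ℕ) (S : Set (Pair n)) : Prop :=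
  ¬ ∃ C : Finset (Pair n), ↑C ⊆ S ∧ C.card = k + 1 ∧
      ∀ e ∈ C, ∀ f ∈ C, e ≠ f → Cross e f

/-- A `k`-triangulation of the `n`-gon: an inclusion-maximal `(k+1)`-crossing-free set. -/
def IsTriangulation (n k : ℕ) (T : Set (Pair n)) : Prop :=
  CrossingFree n k T ∧ ∀ S : Set (Pair n), CrossingFree n k S → T ⊆ S → S = T

/-- The length of a pair `{i,j}` with respect to the `N`-gon: `min (j-i) (N-(j-i))`. -/
def pairLen (N : ℕ) {n : ℕ} (e : Pair n) : ℕ :=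
  min ((e.val.2 : ℕ) - (e.val.1 : ℕ)) (N - ((e.val.2 : ℕ) - (e.val.1 : ℕ)))

/-- A pair is `k`-relevant in the `N`-gon if its length is at least `k+1`. -/
def Relevant (N k : ℕ) {n : ℕ} (e : Pair n) : Prop := k + 1 ≤ pairLen N e

/-- The 2×2 determinant `det (u v)` of two plane vectors. -/
def det2 (u v : ℝ × ℝ) : ℝ := u.1 * v.2 - u.2 * v.1

/-- Points in convex position, listed in counterclockwise order along their convex hull:
they are distinct and every triple `i<j<k` is positively oriented. -/
def ConvexPosition {n : ℕ} (q : Fin n → ℝ × ℝ) : Prop :=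
  Function.Injective q ∧
  ∀ i j k : Fin n, i < j → j < k → 0 < det2 (q j - q i) (q k - q i)

/-- `p` lies on the line through `a` and `b`. -/
def onLine (a b p : ℝ × ℝ) : Prop := det2 (b - a) (p - a) = 0

/-- Row of the bar-and-joint rigidity matrix `R(p)` indexed by the pair `e`:
`p_i - p_j` in block `i`, `p_j - p_i` in block `j`, zeros elsewhere. -/
def bjRow {n d : ℕ} (p : Fin n → Fin d → ℝ) (e : Pair n) : Fin n × Fin d → ℝ :=
  fun ma =>
    if ma.1 = e.val.1 then p e.val.1 ma.2 - p e.val.2 ma.2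
    else if ma.1 = e.val.2 then p e.val.2 ma.2 - p e.val.1 ma.2
    else 0

/-- Row of the hyperconnectivity matrix `H(p)` indexed by the pair `e`:
`p_j` in block `i`, `-p_i` in block `j`, zeros elsewhere. -/
def hypRow {n d : ℕ} (p : Fin n → Fin d → ℝ) (e : Pair n) : Fin n × Fin d → ℝ :=
  fun ma =>
    if ma.1 = e.val.1 then p e.val.2 ma.2
    else if ma.1 = e.val.2 then - p e.val.1 ma.2
    else 0

/-- The vector `c_{ij} = ((x_i-x_j)^{d-1}, (x_i-x_j)^{d-2}(y_i-y_j), …, (y_i-y_j)^{d-1})`. -/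
def cvec (d : ℕ) (qi qj : ℝ × ℝ) : Fin d → ℝ :=
  fun a => (qi.1 - qj.1) ^ (d - 1 - (a : ℕ)) * (qi.2 - qj.2) ^ (a : ℕ)

/-- Row of the cofactor rigidity matrix `C_d(q)` indexed by the pair `e`:
`c_{ij}` in block `i`, `-c_{ij}` in block `j`, zeros elsewhere. -/
def cofRow (d : ℕ) {n : ℕ} (q : Fin n → ℝ × ℝ) (e : Pair n) : Fin n × Fin d → ℝ :=
  fun ma =>
    if ma.1 = e.val.1 then cvec d (q e.val.1) (q e.val.2) ma.2
    else if ma.1 = e.val.2 then - cvec d (q e.val.1) (q e.val.2) ma.2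
    else 0

/-- `x_{ij} = X_i Z_j - Z_i X_j` for vectors in `ℝ³`. -/
def xQ (Qi Qj : ℝ × ℝ × ℝ) : ℝ := Qi.1 * Qj.2.2 - Qi.2.2 * Qj.1

/-- `y_{ij} = Y_i Z_j - Z_i Y_j` for vectors in `ℝ³`. -/
def yQ (Qi Qj : ℝ × ℝ × ℝ) : ℝ := Qi.2.1 * Qj.2.2 - Qi.2.2 * Qj.2.1

/-- The vector `c_{ij} = (x_{ij}^{d-1}, x_{ij}^{d-2} y_{ij}, …, y_{ij}^{d-1})`. -/
def gcvec (d : ℕ) (Qi Qj : ℝ × ℝ × ℝ) : Fin d → ℝ :=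
  fun a => (xQ Qi Qj) ^ (d - 1 - (a : ℕ)) * (yQ Qi Qj) ^ (a : ℕ)

/-- Row of the generalized cofactor rigidity matrix `C_d(Q)` for vectors in `ℝ³`. -/
def gcofRow (d : ℕ) {n : ℕ} (Q : Fin n → ℝ × ℝ × ℝ) (e : Pair n) : Fin n × Fin d → ℝ :=
  fun ma =>
    if ma.1 = e.val.1 then gcvec d (Q e.val.1) (Q e.val.2) ma.2
    else if ma.1 = e.val.2 then - gcvec d (Q e.val.1) (Q e.val.2) ma.2
    else 0

/-- The cone of all nonnegative linear combinations of `{v e : e ∈ S}`. -/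
def coneOf {n : ℕ} {V : Type*} [AddCommGroup V] [Module ℝ V]
    (v : Pair n → V) (S : Set (Pair n)) : Set V :=
  {x | ∃ c : Pair n → ℝ, (∀ e, 0 ≤ c e) ∧ (∀ e, c e ≠ 0 → e ∈ S) ∧ x = ∑ e, c e • v e}

/-- The vectors `(v e)` realize the `k`-associahedron of the `n`-gon as a complete
simplicial fan: (a) the vectors of every `k`-triangulation are linearly independent;
(b) cones of two `k`-triangulations intersect in the cone of their intersection;
(c) the union of all the cones is the linear span of all the vectors. -/
def RealizesFan (n k : ℕ) {V : Type*} [AddCommGroup V] [Module ℝ V]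
    (v : Pair n → V) : Prop :=
  (∀ T : Set (Pair n), IsTriangulation n k T →
      LinearIndependent ℝ (fun e : T => v e.val)) ∧
  (∀ T T' : Set (Pair n), IsTriangulation n k T → IsTriangulation n k T' →
      coneOf v T ∩ coneOf v T' = coneOf v (T ∩ T')) ∧
  (⋃ T ∈ {T : Set (Pair n) | IsTriangulation n k T}, coneOf v T) =
    (Submodule.span ℝ (Set.range v) : Set V)

/-- The set of all 13 pairs of `{1,…,6}` except `{2,5}` and `{3,6}` (0-indexed: `(1,4)`,
`(2,5)`). -/
def G13 : Set (Pair 6) :=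
  {e | e.val ≠ ((1 : Fin 6), (4 : Fin 6)) ∧ e.val ≠ ((2 : Fin 6), (5 : Fin 6))}

/-- The pair `{1,4}` (0-indexed `(0,3)`). -/
def p03 : Pair 6 := ⟨((0 : Fin 6), (3 : Fin 6)), by decide⟩

/-- The pair `{1,5}` (0-indexed `(0,4)`). -/
def p04 : Pair 6 := ⟨((0 : Fin 6), (4 : Fin 6)), by decide⟩

/-- Six points are positively oriented: the lines `q₁q₄` and `q₃q₆` meet in a point strictly on
the opposite side of the line `q₂q₅` from `q₁` (and `q₆`). -/
def PosOriented (q : Fin 6 → ℝ × ℝ) : Prop :=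
  ∃ p : ℝ × ℝ, onLine (q 0) (q 3) p ∧ onLine (q 2) (q 5) p ∧
    det2 (q 4 - q 1) (p - q 1) * det2 (q 4 - q 1) (q 0 - q 1) < 0

/-- Six points are negatively oriented: the lines `q₁q₄` and `q₃q₆` meet in a point strictly on
the same side of the line `q₂q₅` as `q₁` (and `q₆`). -/
def NegOriented (q : Fin 6 → ℝ × ℝ) : Prop :=
  ∃ p : ℝ × ℝ, onLine (q 0) (q 3) p ∧ onLine (q 2) (q 5) p ∧
    0 < det2 (q 4 - q 1) (p - q 1) * det2 (q 4 - q 1) (q 0 - q 1)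

/-- Six points are in Desargues position: the lines `q₁q₄`, `q₂q₅` and `q₃q₆` are concurrent. -/
def DesarguesPos (q : Fin 6 → ℝ × ℝ) : Prop :=
  ∃ p : ℝ × ℝ, onLine (q 0) (q 3) p ∧ onLine (q 1) (q 4) p ∧ onLine (q 2) (q 5) p

/-!
Block `m` of a linear dependence among the rows of `C_d(q)` says that a weighted sum of the vectors
`c_{mj}` vanishes, and pairing it with a product of `d - 1` linear forms gives one scalar equation.
Choosing the forms that vanish in the directions `q_m q_a`, for `a` in a set of `d - 1` vertices,
removes those vertices from the equation. Hence, for points in general position, a dependence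
vanishes at a vertex of degree at most `d`. For `K₆ - {25, 36}` and `d = 3`, if `λ₁₅ = 0` then the
vertices `5, 3, 6, 2, 1` successively have at most three edges left, so `λ = 0`. Eliminating `λ₅₆`
and `λ₁₆` from the equations at the vertices `5`, `6` and `1` shows that `λ₁₄ / λ₁₅` is a positive
multiple of the signed distance from the line `q₂ q₅` to the intersection of the lines `q₁ q₄` and
`q₃ q₆`, positive away from `q₁`.
-/

section Area

/-- Twice the signed area of the triangle `a b c`, positive for counterclockwise triangles. -/
def area (a b c : ℝ × ℝ) : ℝ := det2 (b - a) (c - a)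

lemma area_def (a b c : ℝ × ℝ) :
    area a b c = (b.1 - a.1) * (c.2 - a.2) - (b.2 - a.2) * (c.1 - a.1) := rfl

lemma area_eq_det2_sub (a b c : ℝ × ℝ) : area a b c = det2 (a - b) (a - c) := by
  simp only [area_def, det2, Prod.fst_sub, Prod.snd_sub]; ring

lemma area_rotate (a b c : ℝ × ℝ) : area b c a = area a b c := by
  simp only [area_def]; ring

lemma area_swap (a b c : ℝ × ℝ) : area a c b = -area a b c := by
  simp only [area_def]; ring

lemma area_self_right (a b : ℝ × ℝ) : area a b b = 0 := by
  simp only [area_def]; ring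

lemma area_self_outer (a b : ℝ × ℝ) : area a b a = 0 := by
  simp only [area_def]; ring

lemma area_mul_area_mul_area_sub (a b c d e f : ℝ × ℝ) :
    area a c f * area b e f * area a d e - area a b e * area c e f * area a d f =
      area a e f * (area a c f * area b d e - area c d f * area a b e) := by
  simp only [area_def]; ring

-- Up to the factor `area a c d - area b c d`, the point `p` is
-- `area a c d • b - area b c d • a`, and `area e f` is affine.
lemma area_mul_area_of_onLine {a b c d p : ℝ × ℝ} (hab : onLine a b p) (hcd : onLine c d p)
    (e f : ℝ × ℝ) :
    (area a c d - area b c d) * area e f p =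
      area a c d * area e f b - area b c d * area e f a := by
  simp only [onLine, det2, Prod.fst_sub, Prod.snd_sub] at hab hcd
  simp only [area_def]
  linear_combination ((f.1 - e.1) * (d.2 - c.2) - (f.2 - e.2) * (d.1 - c.1)) * hab
    - ((f.1 - e.1) * (b.2 - a.2) - (f.2 - e.2) * (b.1 - a.1)) * hcd

end Area

namespace ConvexPosition

variable {n : ℕ} {q : Fin n → ℝ × ℝ}

lemma area_pos (hq : ConvexPosition q) {i j k : Fin n} (hij : i < j) (hjk : j < k) :
    0 < area (q i) (q j) (q k) :=
  hq.2 i j k hij hjk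

lemma area_ne_zero_of_lt (hq : ConvexPosition q) {i j k : Fin n} (hjk : j < k) (hij : i ≠ j)
    (hik : i ≠ k) : area (q i) (q j) (q k) ≠ 0 := by
  rcases hij.lt_or_gt with hij | hji
  · exact (hq.area_pos hij hjk).ne'
  rcases hik.lt_or_gt with hik | hki
  · rw [← area_rotate, area_swap, neg_ne_zero]
    exact (hq.area_pos hji hik).ne'
  · rw [← area_rotate]
    exact (hq.area_pos hjk hki).ne'

lemma pairwise_area_ne_zero (hq : ConvexPosition q) {i : Fin n} {s : Set (Fin n)} (hi : i ∉ s) :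
    s.Pairwise fun j k ↦ area (q i) (q j) (q k) ≠ 0 := by
  intro j hj k hk hjk
  have hij : i ≠ j := fun h ↦ hi (h ▸ hj)
  have hik : i ≠ k := fun h ↦ hi (h ▸ hk)
  rcases hjk.lt_or_gt with hjk | hkj
  · exact hq.area_ne_zero_of_lt hjk hij hik
  · rw [area_swap, neg_ne_zero]
    exact hq.area_ne_zero_of_lt hkj hik hij

end ConvexPosition

section Stress

variable {n d : ℕ} {q : Fin n → ℝ × ℝ} {lam : Pair n → ℝ}

/-- The coefficients `lam` of a combination of rows of `C_d(q)`, extended to ordered pairs so that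
block `i` of the combination is `∑ j, stress d lam i j • c_{ij}`. The sign for `j < i` accounts for
the minus sign in block `j` of a row and for `c_{ji} = (-1)^(d-1) c_{ij}`. -/
def stress (d : ℕ) (lam : Pair n → ℝ) (i j : Fin n) : ℝ :=
  if h : i < j then lam ⟨(i, j), h⟩ else if h : j < i then (-1) ^ d * lam ⟨(j, i), h⟩ else 0

lemma stress_of_lt {i j : Fin n} (h : i < j) : stress d lam i j = lam ⟨(i, j), h⟩ :=
  dif_pos h

lemma stress_self (i : Fin n) : stress d lam i i = 0 := by
  simp [stress]

lemma stress_swap (i j : Fin n) : stress d lam j i = (-1) ^ d * stress d lam i j := by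
  rcases lt_trichotomy i j with h | rfl | h
  · simp [stress, h, h.not_gt]
  · simp [stress]
  · simp [stress, h, h.not_gt, ← mul_assoc, ← mul_pow]

lemma neg_cvec_swap (a b : ℝ × ℝ) (k : Fin d) : -cvec d b a k = (-1) ^ d * cvec d a b k := by
  have hsign : (-1 : ℝ) ^ (d - 1 - (k : ℕ)) * (-1) ^ (k : ℕ) = -(-1) ^ d := by
    rw [← pow_add, show d - 1 - (k : ℕ) + k = d - 1 by omega,
      ← pow_sub_one_mul k.pos.ne' (-1 : ℝ), mul_neg_one, neg_neg]
  rw [cvec, cvec, ← neg_sub a.1, ← neg_sub a.2, neg_pow (a.1 - b.1), neg_pow (a.2 - b.2)]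
  linear_combination
    -((a.1 - b.1) ^ (d - 1 - (k : ℕ)) * (a.2 - b.2) ^ (k : ℕ)) * hsign

lemma sum_pair {M : Type*} [AddCommMonoid M] (f : Fin n → Fin n → M) :
    ∑ e : Pair n, f e.val.1 e.val.2 = ∑ i, ∑ j, if i < j then f i j else 0 := by
  rw [← Fintype.sum_prod_type', ← Finset.sum_filter]
  exact (Finset.sum_subtype _ (by simp) fun p : Fin n × Fin n ↦ f p.1 p.2).symm

lemma mul_cofRow_apply (q : Fin n → ℝ × ℝ) (lam : Pair n → ℝ) (e : Pair n) (m : Fin n)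
    (a : Fin d) :
    lam e * cofRow d q e (m, a) =
      (if m = e.val.1 then stress d lam m e.val.2 * cvec d (q m) (q e.val.2) a else 0) +
      if m = e.val.2 then stress d lam m e.val.1 * cvec d (q m) (q e.val.1) a else 0 := by
  obtain ⟨⟨i, j⟩, hij : i < j⟩ := e
  rcases eq_or_ne m i with rfl | hmi
  · simp [cofRow, hij.ne, stress_of_lt hij]
  rcases eq_or_ne m j with rfl | hmj
  · simp only [cofRow, hmi, if_true, if_false, zero_add, stress_swap i, stress_of_lt hij,
      neg_cvec_swap (q m)]
    ring
  · simp [cofRow, hmi, hmj]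

lemma sum_smul_cofRow_apply (q : Fin n → ℝ × ℝ) (lam : Pair n → ℝ) (m : Fin n) (a : Fin d) :
    (∑ e, lam e • cofRow d q e) (m, a) = ∑ j, stress d lam m j * cvec d (q m) (q j) a := by
  set term : Fin n → ℝ := fun j ↦ stress d lam m j * cvec d (q m) (q j) a
  calc (∑ e, lam e • cofRow d q e) (m, a)
      = ∑ e : Pair n, ((if m = e.val.1 then term e.val.2 else 0) +
          if m = e.val.2 then term e.val.1 else 0) := by
        simp only [Finset.sum_apply, Pi.smul_apply, smul_eq_mul, mul_cofRow_apply, term]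
    _ = ∑ i, ∑ j, if i < j then (if m = i then term j else 0) + (if m = j then term i else 0)
          else 0 := sum_pair fun i j ↦ (if m = i then term j else 0) + if m = j then term i else 0
    _ = ∑ j, ((if m < j then term j else 0) + if j < m then term j else 0) := by
        simp only [ite_add_zero, Finset.sum_add_distrib, ← ite_and, and_comm (a := _ < _)]
        simp [ite_and]
    _ = ∑ j, term j := Finset.sum_congr rfl fun j _ ↦ by
        rcases lt_trichotomy m j with h | rfl | h
        · simp [h, h.not_gt]
        · simp [term, stress_self]
        · simp [h, h.not_gt]

-- Absorbing one linear form into the weights `w` lowers the degree by one.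
lemma sum_mul_prod_det2_eq_zero {ι κ : Type*} (s : Finset ι) (v : ι → ℝ × ℝ) (t : Finset κ)
    (u : κ → ℝ × ℝ) (w : ι → ℝ)
    (h : ∀ a ≤ t.card, ∑ i ∈ s, w i * ((v i).1 ^ (t.card - a) * (v i).2 ^ a) = 0) :
    ∑ i ∈ s, w i * ∏ k ∈ t, det2 (u k) (v i) = 0 := by
  induction t using Finset.cons_induction generalizing w with
  | empty => simpa using h
  | cons k t hk ih =>
    rw [Finset.card_cons] at h
    have hstep : ∑ i ∈ s, (w i * det2 (u k) (v i)) * ∏ k ∈ t, det2 (u k) (v i) = 0 := by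
      refine ih _ fun a ha ↦ ?_
      have hx := h a (by omega)
      have hy := h (a + 1) (by omega)
      rw [Nat.add_sub_add_right] at hy
      rw [Nat.sub_add_comm ha] at hx
      calc ∑ i ∈ s, w i * det2 (u k) (v i) * ((v i).1 ^ (t.card - a) * (v i).2 ^ a)
          = (u k).1 * ∑ i ∈ s, w i * ((v i).1 ^ (t.card - a) * (v i).2 ^ (a + 1)) -
            (u k).2 * ∑ i ∈ s, w i * ((v i).1 ^ (t.card - a + 1) * (v i).2 ^ a) := by
            rw [Finset.mul_sum, Finset.mul_sum, ← Finset.sum_sub_distrib]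
            exact Finset.sum_congr rfl fun i _ ↦ by rw [det2]; ring
        _ = 0 := by rw [hx, hy, mul_zero, mul_zero, sub_zero]
    simpa only [Finset.prod_cons, mul_assoc] using hstep

lemma sum_stress_mul_prod_area_eq_zero (hdep : ∑ e, lam e • cofRow d q e = 0) (m : Fin n)
    {t : Finset (Fin n)} (ht : t.card + 1 = d) :
    ∑ j, stress d lam m j * ∏ a ∈ t, area (q m) (q a) (q j) = 0 := by
  subst ht
  simp only [area_eq_det2_sub]
  refine sum_mul_prod_det2_eq_zero _ (fun j ↦ q m - q j) t (fun a ↦ q m - q a) _ fun a ha ↦ ?_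
  have hblock := congrFun hdep (m, ⟨a, Nat.lt_succ_of_le ha⟩)
  rw [sum_smul_cofRow_apply] at hblock
  simpa [cvec] using hblock

lemma sum_stress_mul_area_mul_area_eq_zero (hdep : ∑ e, lam e • cofRow 3 q e = 0) (m : Fin n)
    {a b : Fin n} (hab : a ≠ b) :
    ∑ j, stress 3 lam m j * (area (q m) (q a) (q j) * area (q m) (q b) (q j)) = 0 := by
  have hsum := sum_stress_mul_prod_area_eq_zero hdep m (t := {a, b}) (by rw [Finset.card_pair hab])
  simpa only [Finset.prod_pair hab] using hsum

lemma stress_eq_zero_of_card_eq (hdep : ∑ e, lam e • cofRow d q e = 0) {m : Fin n}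
    {s : Finset (Fin n)} (hs : s.card = d)
    (harea : (s : Set (Fin n)).Pairwise fun a b ↦ area (q m) (q a) (q b) ≠ 0)
    (hout : ∀ j ∉ s, stress d lam m j = 0) (j : Fin n) : stress d lam m j = 0 := by
  by_cases hj : j ∈ s
  swap
  · exact hout j hj
  have hsum := sum_stress_mul_prod_area_eq_zero hdep m
    (t := s.erase j) (by rw [Finset.card_erase_add_one hj, hs])
  rw [Fintype.sum_eq_single j] at hsum
  · refine (mul_eq_zero.mp hsum).resolve_right (Finset.prod_ne_zero_iff.mpr fun a ha ↦ ?_)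
    exact harea (Finset.mem_of_mem_erase ha) hj (Finset.ne_of_mem_erase ha)
  · intro i hij
    by_cases hi : i ∈ s
    · rw [Finset.prod_eq_zero (Finset.mem_erase.mpr ⟨hij, hi⟩) (area_self_right _ _), mul_zero]
    · rw [hout i hi, zero_mul]

end Stress

section SixPoints

variable {d : ℕ} {q : Fin 6 → ℝ × ℝ} {lam : Pair 6 → ℝ}

lemma stress_zero_three : stress d lam 0 3 = lam p03 := rfl

lemma stress_zero_four : stress d lam 0 4 = lam p04 := rfl

lemma stress_one_four_eq_zero (hsupp : ∀ e, lam e ≠ 0 → e ∈ G13) :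
    stress d lam 1 4 = 0 := by
  by_contra h
  exact (hsupp ⟨(1, 4), by decide⟩ h).1 rfl

lemma stress_two_five_eq_zero (hsupp : ∀ e, lam e ≠ 0 → e ∈ G13) :
    stress d lam 2 5 = 0 := by
  by_contra h
  exact (hsupp ⟨(2, 5), by decide⟩ h).2 rfl

lemma eq_zero_of_apply_p04_eq_zero (hq : ConvexPosition q) (hsupp : ∀ e, lam e ≠ 0 → e ∈ G13)
    (hdep : ∑ e, lam e • cofRow 3 q e = 0) (h04 : lam p04 = 0) : lam = 0 := by
  have peel (m : Fin 6) (s : Finset (Fin 6)) (hm : m ∉ s) (hs : s.card = 3)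
      (hout : ∀ j ∉ s, stress 3 lam j m = 0) (j : Fin 6) : stress 3 lam m j = 0 :=
    stress_eq_zero_of_card_eq hdep hs (hq.pairwise_area_ne_zero hm)
      (fun j hj ↦ by rw [stress_swap, hout j hj, mul_zero]) j
  rw [← stress_zero_four (d := 3) (lam := lam)] at h04
  have h14 := stress_one_four_eq_zero (d := 3) hsupp
  have h25 := stress_two_five_eq_zero (d := 3) hsupp
  have h4 := peel 4 {2, 3, 5} (by decide) rfl fun j hj ↦ by
    fin_cases j <;> simp_all [stress_self]
  have h2 := peel 2 {0, 1, 3} (by decide) rfl fun j hj ↦ by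
    fin_cases j <;> simp_all [stress_self, stress_swap 2 5]
  have h5 := peel 5 {0, 1, 3} (by decide) rfl fun j hj ↦ by
    fin_cases j <;> simp_all [stress_self]
  have h1 := peel 1 {0, 3, 4} (by decide) rfl fun j hj ↦ by
    fin_cases j <;> simp_all [stress_self]
  have h0 := peel 0 {3, 4, 5} (by decide) rfl fun j hj ↦ by
    fin_cases j <;> simp_all [stress_self]
  have h3 (j : Fin 6) (hj : 3 < j) : stress 3 lam 3 j = 0 := by
    rw [stress_swap j, mul_eq_zero]
    fin_cases j <;> simp_all
  funext ⟨⟨i, j⟩, hij⟩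
  rw [Pi.zero_apply, ← stress_of_lt (d := 3) (lam := lam) hij]
  fin_cases i <;> simp_all

lemma stress_four_five_mul (hsupp : ∀ e, lam e ≠ 0 → e ∈ G13)
    (hdep : ∑ e, lam e • cofRow 3 q e = 0) :
    stress 3 lam 4 5 * (area (q 2) (q 4) (q 5) * area (q 3) (q 4) (q 5)) =
      lam p04 * (area (q 0) (q 2) (q 4) * area (q 0) (q 3) (q 4)) := by
  have hsum := sum_stress_mul_area_mul_area_eq_zero hdep 4 (a := 2) (b := 3) (by decide)
  simp only [Fin.sum_univ_six, area_self_right, area_self_outer, stress_swap 0 4,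
    stress_swap 1 4, stress_zero_four, stress_one_four_eq_zero hsupp] at hsum
  simp only [area_def] at hsum ⊢
  linear_combination hsum

lemma stress_zero_five_mul (hsupp : ∀ e, lam e ≠ 0 → e ∈ G13)
    (hdep : ∑ e, lam e • cofRow 3 q e = 0) :
    stress 3 lam 0 5 * (area (q 0) (q 1) (q 5) * area (q 0) (q 3) (q 5)) =
      -(stress 3 lam 4 5 * (area (q 1) (q 4) (q 5) * area (q 3) (q 4) (q 5))) := by
  have hsum := sum_stress_mul_area_mul_area_eq_zero hdep 5 (a := 1) (b := 3) (by decide)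
  simp only [Fin.sum_univ_six, area_self_right, area_self_outer, stress_swap 0 5,
    stress_swap 4 5, stress_swap 2 5, stress_two_five_eq_zero hsupp] at hsum
  simp only [area_def] at hsum ⊢
  linear_combination -hsum

lemma apply_p03_mul (hq : ConvexPosition q) (hsupp : ∀ e, lam e ≠ 0 → e ∈ G13)
    (hdep : ∑ e, lam e • cofRow 3 q e = 0) :
    lam p03 * (area (q 0) (q 1) (q 3) * area (q 0) (q 2) (q 3) *
        area (q 2) (q 4) (q 5) * area (q 0) (q 3) (q 5)) =
      lam p04 * area (q 0) (q 2) (q 4) * area (q 0) (q 4) (q 5) *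
        (area (q 0) (q 2) (q 5) * area (q 1) (q 3) (q 4) -
          area (q 2) (q 3) (q 5) * area (q 0) (q 1) (q 4)) := by
  have hsum := sum_stress_mul_area_mul_area_eq_zero hdep 0 (a := 1) (b := 2) (by decide)
  simp only [Fin.sum_univ_six, area_self_right, area_self_outer, stress_zero_three,
    stress_zero_four] at hsum
  have h345 := (hq.area_pos (i := 3) (j := 4) (k := 5) (by decide) (by decide)).ne'
  apply mul_right_cancel₀ h345
  linear_combination
    area (q 2) (q 4) (q 5) * area (q 0) (q 3) (q 5) * area (q 3) (q 4) (q 5) * hsum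
    - area (q 0) (q 2) (q 5) * area (q 2) (q 4) (q 5) * area (q 3) (q 4) (q 5) *
      stress_zero_five_mul hsupp hdep
    + area (q 0) (q 2) (q 5) * area (q 1) (q 4) (q 5) * area (q 3) (q 4) (q 5) *
      stress_four_five_mul hsupp hdep
    + lam p04 * area (q 0) (q 2) (q 4) * area (q 3) (q 4) (q 5) *
      area_mul_area_mul_area_sub (q 0) (q 1) (q 2) (q 3) (q 4) (q 5)

lemma area_one_four_mul_of_onLine {p : ℝ × ℝ} (h03 : onLine (q 0) (q 3) p)
    (h25 : onLine (q 2) (q 5) p) :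
    (area (q 0) (q 2) (q 5) + area (q 2) (q 3) (q 5)) * area (q 1) (q 4) p =
      area (q 2) (q 3) (q 5) * area (q 0) (q 1) (q 4) -
        area (q 0) (q 2) (q 5) * area (q 1) (q 3) (q 4) := by
  have h := area_mul_area_of_onLine h03 h25 (q 1) (q 4)
  rw [← area_rotate (q 3) (q 2), area_swap (q 2), area_swap (q 1) (q 3), area_rotate (q 0)] at h
  linear_combination h

lemma exists_pos_apply_p03_mul_apply_p04_eq (hq : ConvexPosition q)
    (hsupp : ∀ e, lam e ≠ 0 → e ∈ G13) (hdep : ∑ e, lam e • cofRow 3 q e = 0)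
    (h04 : lam p04 ≠ 0) {p : ℝ × ℝ} (h03 : onLine (q 0) (q 3) p) (h25 : onLine (q 2) (q 5) p) :
    ∃ r > 0, lam p03 * lam p04 = -area (q 1) (q 4) p * r := by
  have pos (i j k : Fin 6) (hij : i < j := by decide) (hjk : j < k := by decide) :
      0 < area (q i) (q j) (q k) := hq.area_pos hij hjk
  set D := area (q 0) (q 1) (q 3) * area (q 0) (q 2) (q 3) * area (q 2) (q 4) (q 5) *
    area (q 0) (q 3) (q 5)
  set N := area (q 0) (q 2) (q 4) * area (q 0) (q 4) (q 5) *
    (area (q 0) (q 2) (q 5) + area (q 2) (q 3) (q 5))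
  have hD : 0 < D := mul_pos (mul_pos (mul_pos (pos 0 1 3) (pos 0 2 3)) (pos 2 4 5)) (pos 0 3 5)
  have hN : 0 < N := mul_pos (mul_pos (pos 0 2 4) (pos 0 4 5)) (add_pos (pos 0 2 5) (pos 2 3 5))
  have hratio : lam p03 * D = -area (q 1) (q 4) p * (lam p04 * N) := by
    linear_combination apply_p03_mul hq hsupp hdep +
      lam p04 * area (q 0) (q 2) (q 4) * area (q 0) (q 4) (q 5) *
        area_one_four_mul_of_onLine h03 h25
  refine ⟨lam p04 ^ 2 * N / D, by positivity, ?_⟩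
  rw [mul_div_assoc', eq_div_iff hD.ne']
  linear_combination lam p04 * hratio

end SixPoints

/-- For six points in convex position and `λ` a nonzero dependence among the
rows of `C₃(q)` supported on `G = K₆ - {25,36}`: `λ₁₅ ≠ 0`, and `λ₁₄·λ₁₅` is positive, negative
or zero according to whether the points are positively oriented, negatively oriented or in
Desargues position. -/
theorem stmt14 (q : Fin 6 → ℝ × ℝ) (hq : ConvexPosition q)
    (lam : Pair 6 → ℝ) (hsupp : ∀ e, lam e ≠ 0 → e ∈ G13)
    (hdep : ∑ e : Pair 6, lam e • cofRow 3 q e = 0) (hne : lam ≠ 0) :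
    lam p04 ≠ 0 ∧
    (PosOriented q → 0 < lam p03 * lam p04) ∧
    (NegOriented q → lam p03 * lam p04 < 0) ∧
    (DesarguesPos q → lam p03 = 0) := by
  have h04 : lam p04 ≠ 0 := fun h ↦ hne (eq_zero_of_apply_p04_eq_zero hq hsupp hdep h)
  have h140 : 0 < area (q 1) (q 4) (q 0) := by
    rw [area_rotate]
    exact hq.area_pos (by decide) (by decide)
  have hlam {p : ℝ × ℝ} (h03 : onLine (q 0) (q 3) p) (h25 : onLine (q 2) (q 5) p) :
      ∃ r > 0, lam p03 * lam p04 = -area (q 1) (q 4) p * r :=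
    exists_pos_apply_p03_mul_apply_p04_eq hq hsupp hdep h04 h03 h25
  refine ⟨h04, ?_, ?_, ?_⟩
  · rintro ⟨p, h03, h25, hside⟩
    obtain ⟨r, hr, hprod⟩ := hlam h03 h25
    have hp : area (q 1) (q 4) p < 0 := neg_of_mul_neg_left hside h140.le
    exact hprod ▸ mul_pos (neg_pos.mpr hp) hr
  · rintro ⟨p, h03, h25, hside⟩
    obtain ⟨r, hr, hprod⟩ := hlam h03 h25
    have hp : 0 < area (q 1) (q 4) p := pos_of_mul_pos_left hside h140.le
    exact hprod ▸ mul_neg_of_neg_of_pos (neg_neg_of_pos hp) hr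
  · rintro ⟨p, h03, h14, h25⟩
    obtain ⟨r, -, hprod⟩ := hlam h03 h25
    have hp : area (q 1) (q 4) p = 0 := h14
    rw [hp, neg_zero, zero_mul] at hprod
    exact (mul_eq_zero.mp hprod).resolve_right h04
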